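/- arXiv:1409.3475 — 2 statements merged into one kernel-verified Lean document; each statement's English description precedes it below -/
import Mathlib

section
/- Let p : V → M be a local isometry of metric spaces, let x̄ ∈ V, and let C > 0 be such that the closed ball of radius r centered at x̄ in V is a complete metric space for every r < C. Let γ : [0,1] → M be a continuous path with γ(0) = p(x̄) and length L(γ) < C. Then there exists a unique continuous path γ̃ : [0,1] → V with p ∘ γ̃ = γ and γ̃(0) = x̄; moreover L(γ̃) = L(γ) and γ̃([0,1]) is contained in the open ball B(x̄, C). -/
/-- A map between metric spaces is a local isometry if every point has an open
neighbourhood `U` with `p '' U` open such that `p` restricted to `U` is a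
distance-preserving bijection onto `p '' U`. -/
def IsLocalIsometry {V M : Type*} [MetricSpace V] [MetricSpace M] (p : V → M) : Prop :=
  ∀ v : V, ∃ U : Set V, IsOpen U ∧ v ∈ U ∧ IsOpen (p '' U) ∧ Set.InjOn p U ∧
    ∀ a ∈ U, ∀ b ∈ U, dist (p a) (p b) = dist a b

open Set Filter Topology

theorem li_continuous {V M : Type*} [MetricSpace V] [MetricSpace M] {p : V → M}
    (hp : IsLocalIsometry p) : Continuous p := by
  rw [continuous_iff_continuousAt]
  intro v
  obtain ⟨U, hU, hv, -, -, hd⟩ := hp v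
  rw [Metric.continuousAt_iff']
  intro ε hε
  filter_upwards [hU.mem_nhds hv, Metric.ball_mem_nhds v hε] with x hx hx2
  rw [hd x hx v hv]
  exact hx2

theorem li_locInj {V M : Type*} [MetricSpace V] [MetricSpace M] {p : V → M}
    (hp : IsLocalIsometry p) : IsLocallyInjective p := by
  intro v
  obtain ⟨U, hU, hv, -, hi, -⟩ := hp v
  exact ⟨U, hU, hv, hi⟩

theorem li_evar {V M : Type*} [MetricSpace V] [MetricSpace M] {p : V → M}
    (hp : IsLocalIsometry p) {f : ℝ → V} {a b : ℝ} (hab : a ≤ b)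
    (hf : ContinuousOn f (Icc a b)) :
    eVariationOn f (Icc a b) = eVariationOn (p ∘ f) (Icc a b) := by
  choose U hU hv _ _ hd using hp
  have hf' : Continuous (fun x : Icc a b => f x) :=
    continuousOn_iff_continuous_domRestrict.1 hf
  obtain ⟨t, ht0, htm, ⟨m, hm⟩, hc⟩ := exists_monotone_Icc_subset_open_cover_Icc hab
    (c := fun v : V => (fun x : Icc a b => f x) ⁻¹' (U v))
    (fun v => (hU v).preimage hf')
    (fun x _ => mem_iUnion.2 ⟨f x, hv _⟩)
  have hI : Monotone (fun n => (t n : ℝ)) := fun i j h => htm h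
  have h1 := eVariationOn.sum' f hI (n := m)
  have h2 := eVariationOn.sum' (p ∘ f) hI (n := m)
  simp only [ht0, hm m le_rfl] at h1 h2
  rw [← h1, ← h2]
  refine Finset.sum_congr rfl fun i _ => ?_
  obtain ⟨v, hv'⟩ := hc i
  have hmem : ∀ x ∈ Icc (t i : ℝ) (t (i+1)), f x ∈ U v := by
    intro x hx
    have hxab : x ∈ Icc a b := ⟨(t i).2.1.trans hx.1, hx.2.trans (t (i+1)).2.2⟩
    exact @hv' ⟨x, hxab⟩ ⟨hx.1, hx.2⟩
  unfold eVariationOn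
  refine iSup_congr fun q => Finset.sum_congr rfl fun j _ => ?_
  simp only [Function.comp_apply, edist_dist]
  rw [hd v _ (hmem _ (q.2.2.2 _)) _ (hmem _ (q.2.2.2 _))]

/-- A lift of `g` up to time `t`. -/
def LiftTo {V M : Type*} [MetricSpace V] (p : V → M) (g : ℝ → M) (xbar : V)
    (t : ℝ) (f : ℝ → V) : Prop :=
  ContinuousOn f (Iic t) ∧ (∀ s ≤ t, p (f s) = g s) ∧ ∀ s ≤ -1, f s = xbar

theorem LiftTo.mono {V M : Type*} [MetricSpace V] {p : V → M} {g : ℝ → M} {xbar : V}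
    {t t' : ℝ} {f : ℝ → V} (h : LiftTo p g xbar t f) (ht : t' ≤ t) : LiftTo p g xbar t' f :=
  ⟨h.1.mono (Iic_subset_Iic.2 ht), fun s hs => h.2.1 s (hs.trans ht), h.2.2⟩

theorem LiftTo.unique {V M : Type*} [MetricSpace V] [MetricSpace M] {p : V → M}
    (hp : IsLocalIsometry p) {g : ℝ → M} {xbar : V}
    {t : ℝ} {f f' : ℝ → V} (h : LiftTo p g xbar t f) (h' : LiftTo p g xbar t f') :
    EqOn f f' (Iic t) := by
  refine (T2Space.isSeparatedMap p).eqOn_of_comp_eqOn (li_locInj hp) isPreconnected_Iic h.1 h'.1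
    (fun s hs => ?_) (a := min t (-1)) (mem_Iic.2 (min_le_left _ _)) ?_
  · simp [h.2.1 s hs, h'.2.1 s hs]
  · rw [h.2.2 _ (min_le_right _ _), h'.2.2 _ (min_le_right _ _)]

theorem LiftTo.edist_le {V M : Type*} [MetricSpace V] [MetricSpace M] {p : V → M}
    (hp : IsLocalIsometry p) {g : ℝ → M} {xbar : V}
    {t : ℝ} {f : ℝ → V} (h : LiftTo p g xbar t f) {s s' : ℝ} (hs : s ≤ s') (hs' : s' ≤ t) :
    edist (f s) (f s') ≤ eVariationOn g (Icc s s') := by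
  have h1 := li_evar hp hs (h.1.mono (Icc_subset_Iic_self.trans (Iic_subset_Iic.2 hs')))
  have h2 : eVariationOn (p ∘ f) (Icc s s') = eVariationOn g (Icc s s') :=
    eVariationOn.eq_of_eqOn fun x hx => h.2.1 x (hx.2.trans hs')
  rw [← h2, ← h1]
  exact eVariationOn.edist_le f (left_mem_Icc.2 hs) (right_mem_Icc.2 hs)

theorem LiftTo.dist_xbar_le {V M : Type*} [MetricSpace V] [MetricSpace M] {p : V → M}
    (hp : IsLocalIsometry p) {g : ℝ → M} {xbar : V} (hfin : eVariationOn g univ ≠ ⊤)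
    {t : ℝ} {f : ℝ → V} (h : LiftTo p g xbar t f) {s : ℝ} (hs : s ≤ t) :
    dist (f s) xbar ≤ (eVariationOn g univ).toReal := by
  have h1 := h.edist_le hp (min_le_left s (-1)) hs
  rw [h.2.2 _ (min_le_right _ _), edist_comm] at h1
  have h2 := h1.trans (eVariationOn.mono g (subset_univ _))
  rw [dist_edist]
  exact ENNReal.toReal_mono hfin h2

theorem LiftTo.extend {V M : Type*} [MetricSpace V] [MetricSpace M] {p : V → M}
    {g : ℝ → M} (hg : Continuous g) {xbar : V}
    {t t' : ℝ} {f : ℝ → V} (h : LiftTo p g xbar t f) (ht : -1 ≤ t)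
    {U : Set V} (hi : InjOn p U) (hd : ∀ a ∈ U, ∀ b ∈ U, dist (p a) (p b) = dist a b)
    (hfU : f t ∈ U) (hgU : ∀ s ∈ Icc t t', g s ∈ p '' U) :
    ∃ f', LiftTo p g xbar t' f' := by
  classical
  have : Nonempty V := ⟨xbar⟩
  set σ := Function.invFunOn p U with hσ
  have hσU : ∀ y ∈ p '' U, σ y ∈ U := fun y hy => Function.invFunOn_mem hy
  have hpσ : ∀ y ∈ p '' U, p (σ y) = y := fun y hy => Function.invFunOn_eq hy
  have hσc : ContinuousOn σ (p '' U) := by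
    intro y hy
    rw [ContinuousWithinAt, Metric.tendsto_nhds]
    intro ε hε
    filter_upwards [self_mem_nhdsWithin, mem_nhdsWithin_of_mem_nhds (Metric.ball_mem_nhds y hε)]
      with z hz hz2
    rw [← hd _ (hσU z hz) _ (hσU y hy), hpσ z hz, hpσ y hy]
    exact hz2
  rcases le_total t' t with htt | htt
  · exact ⟨f, h.mono htt⟩
  have hft : σ (g t) = f t := by
    have : g t ∈ p '' U := hgU t (left_mem_Icc.2 htt)
    exact hi (hσU _ this) hfU (by rw [hpσ _ this, h.2.1 t le_rfl])
  refine ⟨fun s => if s ≤ t then f s else σ (g s), ?_, ?_, ?_⟩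
  · have h1 : ContinuousOn (fun s => if s ≤ t then f s else σ (g s)) (Iic t) :=
      h.1.congr fun s hs => if_pos hs
    have h2 : ContinuousOn (fun s => if s ≤ t then f s else σ (g s)) (Icc t t') := by
      refine (hσc.comp hg.continuousOn hgU).congr fun s hs => ?_
      simp only [Function.comp_apply]
      split_ifs with hst
      · rw [le_antisymm hst hs.1, hft]
      · rfl
    have := h1.union_of_isClosed h2 isClosed_Iic isClosed_Icc
    rwa [Iic_union_Icc_eq_Iic htt] at this
  · intro s hs
    dsimp only
    split_ifs with hst
    · exact h.2.1 s hst
    · exact hpσ _ (hgU s ⟨(not_le.1 hst).le, hs⟩)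
  · intro s hs
    dsimp only
    rw [if_pos (hs.trans ht)]
    exact h.2.2 s hs

theorem exists_lift {V M : Type*} [MetricSpace V] [MetricSpace M] {p : V → M}
    (hp : IsLocalIsometry p) {g : ℝ → M} (hg : Continuous g) {xbar : V}
    (hfin : eVariationOn g univ ≠ ⊤)
    (hcomp : IsComplete (Metric.closedBall xbar (eVariationOn g univ).toReal))
    (h0 : ∀ s ≤ 0, g s = p xbar) : ∃ f, LiftTo p g xbar 1 f := by
  by_contra hno
  set S : Set ℝ := {t | ∃ f, LiftTo p g xbar t f} with hS
  have hdown : ∀ t ∈ S, ∀ t' ≤ t, t' ∈ S := fun t ⟨f, hf⟩ t' h => ⟨f, hf.mono h⟩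
  have h0S : (0 : ℝ) ∈ S :=
    ⟨fun _ => xbar, continuousOn_const, fun s hs => (h0 s hs).symm, fun _ _ => rfl⟩
  have hbdd : BddAbove S := ⟨1, fun t ht => by
    by_contra hlt
    exact hno (hdown t ht 1 (not_le.1 hlt).le)⟩
  set c := sSup S with hcdef
  have hc0 : 0 ≤ c := le_csSup hbdd h0S
  have hlt : ∀ s < c, s ∈ S := by
    intro s hs
    obtain ⟨t, ht, hst⟩ := exists_lt_of_lt_csSup ⟨0, h0S⟩ hs
    exact hdown t ht s hst.le
  have hch : ∀ s, ∃ f, s < c → LiftTo p g xbar s f := by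
    intro s
    by_cases hs : s < c
    · obtain ⟨f, hf⟩ := hlt s hs
      exact ⟨f, fun _ => hf⟩
    · exact ⟨fun _ => xbar, fun h => absurd h hs⟩
  choose F hF using hch
  set v : ℝ → ℝ := fun t => (eVariationOn g (Iic t)).toReal with hv
  have hfin' : ∀ s, eVariationOn g s ≠ ⊤ := fun s =>
    ne_top_of_le_ne_top hfin (eVariationOn.mono g (subset_univ _))
  have hvm : Monotone v := fun a b hab =>
    ENNReal.toReal_mono (hfin' _) (eVariationOn.mono g (Iic_subset_Iic.2 hab))
  have hd0 : ∀ s s', s ≤ s' → s' < c → dist (F s s) (F s' s') ≤ v s' - v s := by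
    intro s s' hss hs'
    have e1 : F s s = F s' s :=
      (hF s (hss.trans_lt hs')).unique hp ((hF s' hs').mono hss) (mem_Iic.2 le_rfl)
    have e2 := (hF s' hs').edist_le hp hss le_rfl
    have e3 : eVariationOn g (Iic s) + eVariationOn g (Icc s s') = eVariationOn g (Iic s') := by
      rw [← eVariationOn.union g (x := s) isGreatest_Iic (isLeast_Icc hss),
        Iic_union_Icc_eq_Iic hss]
    have e4 : v s' = v s + (eVariationOn g (Icc s s')).toReal := by
      simp only [hv]
      rw [← e3, ENNReal.toReal_add (hfin' _) (hfin' _)]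
    rw [e1, dist_edist, e4, add_sub_cancel_left]
    exact ENNReal.toReal_mono (hfin' _) e2
  have hd1 : ∀ s < c, ∀ s' < c, dist (F s s) (F s' s') ≤ dist (v s) (v s') := by
    intro s hs s' hs'
    rcases le_total s s' with h | h
    · rw [dist_comm (v s), Real.dist_eq]
      exact (hd0 s s' h hs').trans (le_abs_self _)
    · rw [dist_comm, Real.dist_eq]
      exact (hd0 s' s h hs).trans (le_abs_self _)
  have hvC : Cauchy (map v (𝓝[<] c)) := (hvm.tendsto_leftLim c).cauchy_map
  have hFC : Cauchy (map (fun s => F s s) (𝓝[<] c)) := by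
    rw [Metric.cauchy_iff]
    refine ⟨inferInstance, fun ε hε => ?_⟩
    obtain ⟨t, ht, htε⟩ := (Metric.cauchy_iff.1 hvC).2 ε hε
    refine ⟨(fun s => F s s) '' (v ⁻¹' t ∩ Iio c), image_mem_map
      (inter_mem ht self_mem_nhdsWithin), ?_⟩
    rintro _ ⟨a, ha, rfl⟩ _ ⟨b, hb, rfl⟩
    exact (hd1 a ha.2 b hb.2).trans_lt (htε _ ha.1 _ hb.1)
  obtain ⟨y, -, hy⟩ := hcomp _ hFC (by
    rw [le_principal_iff, mem_map]
    filter_upwards [self_mem_nhdsWithin] with s hs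
    exact (hF s hs).dist_xbar_le hp hfin le_rfl)
  have hy' : Tendsto (fun s => F s s) (𝓝[<] c) (𝓝 y) := hy
  have hpy : p y = g c := by
    refine tendsto_nhds_unique (((li_continuous hp).tendsto y).comp hy') ?_
    refine ((hg.tendsto c).mono_left nhdsWithin_le_nhds).congr' ?_
    filter_upwards [self_mem_nhdsWithin] with s hs
    exact ((hF s hs).2.1 s le_rfl).symm
  obtain ⟨U, hU, hyU, hpU, hi, hd⟩ := hp y
  have hgn : g ⁻¹' (p '' U) ∈ 𝓝 c :=
    hg.continuousAt.preimage_mem_nhds (hpU.mem_nhds (hpy ▸ mem_image_of_mem p hyU))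
  obtain ⟨δ, hδ, hball⟩ := Metric.mem_nhds_iff.1 hgn
  have hev : ∀ᶠ s in 𝓝[<] c, F s s ∈ U ∧ s < c ∧ max (c - δ) (-1) < s := by
    have h1 := hy'.eventually (hU.mem_nhds hyU)
    have h2 : ∀ᶠ s in 𝓝[<] c, max (c - δ) (-1) < s :=
      nhdsWithin_le_nhds (lt_mem_nhds (max_lt (by linarith) (by linarith)))
    filter_upwards [h1, h2, self_mem_nhdsWithin] with s a b d using ⟨a, d, b⟩
  obtain ⟨s, hsU, hsc, hs⟩ := hev.exists
  rw [max_lt_iff] at hs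
  have hext := (hF s hsc).extend hg (t' := c + δ / 2) hs.2.le hi hd hsU (by
    intro r hr
    apply hball
    rw [Metric.mem_ball, Real.dist_eq, abs_lt]
    constructor <;> linarith [hr.1, hr.2, hs.1])
  have := le_csSup hbdd (show c + δ / 2 ∈ S from hext)
  linarith

/-- Path lifting along a local isometry `p : V → M`: if all closed balls of
radius `r < C` around `xbar ∈ V` are complete and `γ : [0,1] → M` is a continuous path
starting at `p xbar` of length `< C`, then `γ` admits a unique continuous lift starting
at `xbar`; the lift has the same length and image inside the open ball `B(xbar, C)`.
(Lengths are total variations `eVariationOn · Set.univ`, valued in `ℝ≥0∞`.) -/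
theorem localIsometry_path_lifting
    {V M : Type*} [MetricSpace V] [MetricSpace M]
    (p : V → M) (hp : IsLocalIsometry p) (xbar : V) (C : ℝ) (hC : 0 < C)
    (hcomplete : ∀ r : ℝ, r < C → IsComplete (Metric.closedBall xbar r))
    (γ : Set.Icc (0 : ℝ) 1 → M) (hγ : Continuous γ)
    (hstart : γ ⟨0, Set.left_mem_Icc.mpr zero_le_one⟩ = p xbar)
    (hlen : eVariationOn γ Set.univ < ENNReal.ofReal C) :
    ∃ γ' : Set.Icc (0 : ℝ) 1 → V,
      (Continuous γ' ∧ (∀ t, p (γ' t) = γ t) ∧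
        γ' ⟨0, Set.left_mem_Icc.mpr zero_le_one⟩ = xbar) ∧
      (∀ τ : Set.Icc (0 : ℝ) 1 → V,
        (Continuous τ ∧ (∀ t, p (τ t) = γ t) ∧
          τ ⟨0, Set.left_mem_Icc.mpr zero_le_one⟩ = xbar) → τ = γ') ∧
      eVariationOn γ' Set.univ = eVariationOn γ Set.univ ∧
      ∀ t, γ' t ∈ Metric.ball xbar C := by
  classical
  have h01 : (0 : ℝ) ≤ 1 := zero_le_one
  set g : ℝ → M := γ ∘ projIcc 0 1 h01 with hgdef
  have hg : Continuous g := hγ.comp continuous_projIcc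
  have hgle : eVariationOn g univ ≤ eVariationOn γ univ :=
    eVariationOn.comp_le_of_monotoneOn γ _ ((monotone_projIcc h01).monotoneOn _) (mapsTo_univ _ _)
  have hfin : eVariationOn g univ ≠ ⊤ := ((hgle.trans_lt hlen).trans ENNReal.ofReal_lt_top).ne
  have hlC : (eVariationOn g univ).toReal < C :=
    (ENNReal.lt_ofReal_iff_toReal_lt hfin).1 (hgle.trans_lt hlen)
  have h0 : ∀ s ≤ 0, g s = p xbar := by
    intro s hs
    rw [← hstart]
    simp only [hgdef, Function.comp_apply]
    rw [projIcc_of_le_left h01 hs]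
  obtain ⟨f, hf⟩ := exists_lift hp hg hfin (hcomplete _ hlC) h0
  have hf0 : f 0 = xbar := by
    have hconst : LiftTo p g xbar 0 (fun _ => xbar) :=
      ⟨continuousOn_const, fun s hs => (h0 s hs).symm, fun _ _ => rfl⟩
    exact (hf.mono h01).unique hp hconst (mem_Iic.2 le_rfl)
  have hfc : ContinuousOn f (Icc 0 1) := hf.1.mono Icc_subset_Iic_self
  have hcont : Continuous (fun t : Icc (0 : ℝ) 1 => f t) :=
    continuousOn_iff_continuous_domRestrict.1 hfc
  have hlift : ∀ t : Icc (0 : ℝ) 1, p (f t) = γ t := by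
    intro t
    rw [hf.2.1 t t.2.2]
    simp [hgdef]
  refine ⟨fun t => f t, ⟨hcont, hlift, hf0⟩, ?_, ?_, ?_⟩
  · rintro τ ⟨hτ, hτl, hτ0⟩
    refine (T2Space.isSeparatedMap p).eq_of_comp_eq (li_locInj hp) hτ hcont ?_
      ⟨0, Set.left_mem_Icc.mpr zero_le_one⟩ ?_
    · funext t
      simp [hτl, hlift]
    · rw [hτ0]
      exact hf0.symm
  · have hm : MonotoneOn (Subtype.val : Icc (0 : ℝ) 1 → ℝ) univ := fun a _ b _ h => h
    have e1 := eVariationOn.comp_eq_of_monotoneOn f _ hm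
    have e2 := eVariationOn.comp_eq_of_monotoneOn (p ∘ f) _ hm
    have e3 : (p ∘ f) ∘ (Subtype.val : Icc (0 : ℝ) 1 → ℝ) = γ := funext hlift
    rw [image_univ, Subtype.range_coe] at e1 e2
    rw [e3, ← li_evar hp h01 hfc, ← e1] at e2
    exact e2.symm
  · intro t
    exact (hf.dist_xbar_le hp hfin t.2.2).trans_lt hlC
end

section
/- Let p : V → M be a local isometry of metric spaces, let x̄ ∈ V, and let C > 0 be such that the closed ball of radius r centered at x̄ in V is a complete metric space for every r < C. Let σ : Δ^k → M be a Lipschitz map with Lip(σ) < C/√2, and let y ∈ Δ^k be a point with σ(y) = p(x̄). Then there exists a unique continuous map σ̃ : Δ^k → V with p ∘ σ̃ = σ and σ̃(y) = x̄; moreover σ̃(Δ^k) ⊆ B(x̄, C) and Lip(σ̃) = Lip(σ). -/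
open scoped NNReal

/-- The standard `k`-simplex `Δ^k ⊆ ℝ^{k+1}`, with the Euclidean metric. -/
def stdSimplexE (k : ℕ) : Set (EuclideanSpace ℝ (Fin (k + 1))) :=
  {x | (∀ i, 0 ≤ x i) ∧ ∑ i, x i = 1}

open Set Filter Topology in
lemma aux_dist_le {V : Type*} [MetricSpace V] {h : ℝ → V} {a b c : ℝ} (hab : a ≤ b)
    (hc : ContinuousOn h (Icc a b))
    (hl : ∀ x ∈ Ico a b, ∀ᶠ t in 𝓝[>] x, dist (h x) (h t) ≤ c * (t - x)) :
    dist (h a) (h b) ≤ c * (b - a) := by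
  have key : Icc a b ⊆ {t | dist (h a) (h t) ≤ c * (t - a)} := by
    apply IsClosed.Icc_subset_of_forall_mem_nhdsWithin
    · have h1 : ContinuousOn (fun t => c * (t - a) - dist (h a) (h t)) (Icc a b) := by
        fun_prop
      have := h1.preimage_isClosed_of_isClosed isClosed_Icc (isClosed_Ici (a := (0:ℝ)))
      convert this using 1
      ext t; simp [and_comm]
    · simp
    · rintro x ⟨hx, hx2⟩
      filter_upwards [hl x hx2] with t ht
      have := dist_triangle (h a) (h x) (h t)
      simp only [mem_ofPred_eq] at hx ⊢
      nlinarith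
  exact key ⟨hab, le_rfl⟩

lemma aux_homeo {V M : Type*} [MetricSpace V] [MetricSpace M] {p : V → M}
    (hp : IsLocalIsometry p) : IsLocalHomeomorph p := by
  rw [isLocalHomeomorph_iff_isOpenEmbedding_restrict]
  intro x
  obtain ⟨U, hU, hx, hpU, -, hd⟩ := hp x
  refine ⟨U, hU.mem_nhds hx, ⟨Isometry.isEmbedding ?_, ?_⟩⟩
  · exact Isometry.of_dist_eq fun a b => hd a a.2 b b.2
  · rwa [Set.range_domRestrict]

open Set Filter Topology in
lemma aux_lift_dist {V M : Type*} [MetricSpace V] [MetricSpace M] {p : V → M}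
    (hp : IsLocalIsometry p) {γ : ℝ → M} {L : ℝ≥0} (hγ : LipschitzWith L γ) {Γ : ℝ → V}
    {a b : ℝ} (hab : a ≤ b) (hc : ContinuousOn Γ (Icc a b))
    (hl : ∀ s ∈ Icc a b, p (Γ s) = γ s) : dist (Γ a) (Γ b) ≤ L * (b - a) := by
  apply aux_dist_le hab hc
  intro x hx
  obtain ⟨U, hU, hxU, -, -, hd⟩ := hp (Γ x)
  have h1 : ContinuousWithinAt Γ (Ioi x) x :=
    (hc x (Ico_subset_Icc_self hx)).mono_of_mem_nhdsWithin
      (mem_of_superset (Ioc_mem_nhdsGT hx.2) (fun t ht => ⟨hx.1.trans ht.1.le, ht.2⟩))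
  filter_upwards [h1 (hU.mem_nhds hxU), Ioc_mem_nhdsGT hx.2] with t ht ht2
  rw [← hd _ hxU _ ht, hl x (Ico_subset_Icc_self hx), hl t ⟨hx.1.trans ht2.1.le, ht2.2⟩]
  have := hγ.dist_le_mul x t
  rwa [dist_comm x t, Real.dist_eq, abs_of_nonneg (by linarith [ht2.1])] at this

open Set Filter Topology in
lemma aux_path {V M : Type*} [MetricSpace V] [MetricSpace M] {p : V → M}
    (hp : IsLocalIsometry p) {xbar : V} {C : ℝ}
    (hcomplete : ∀ r : ℝ, r < C → IsComplete (Metric.closedBall xbar r))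
    {γ : ℝ → M} {L : ℝ≥0} (hγ : LipschitzWith L γ) (hL : (L : ℝ) < C) (h0 : γ 0 = p xbar) :
    ∃ Γ : ℝ → V, ContinuousOn Γ (Icc 0 1) ∧ Γ 0 = xbar ∧ ∀ s ∈ Icc (0:ℝ) 1, p (Γ s) = γ s := by
  classical
  have hh := aux_homeo hp
  let S : Set ℝ := {t | ∃ Γ : ℝ → V, ContinuousOn Γ (Icc 0 t) ∧ Γ 0 = xbar ∧
    ∀ s ∈ Icc (0:ℝ) t, p (Γ s) = γ s}
  have hS0 : (0:ℝ) ∈ S := by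
    refine ⟨fun _ => xbar, continuousOn_const, rfl, ?_⟩
    intro s hs
    rw [le_antisymm hs.2 hs.1, h0]
  have hdown : ∀ s t, s ≤ t → t ∈ S → s ∈ S := by
    rintro s t hst ⟨Γ, h1, h2, h3⟩
    exact ⟨Γ, h1.mono (Icc_subset_Icc_right hst), h2, fun u hu => h3 u ⟨hu.1, hu.2.trans hst⟩⟩
  have hmain : Icc (0:ℝ) 1 ⊆ S := by
    apply IsClosed.Icc_subset_of_forall_mem_nhdsWithin _ hS0
    · rintro x ⟨⟨Γ, h1, h2, h3⟩, hx⟩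
      obtain ⟨e, hxe, rfl⟩ := hh (Γ x)
      have hγx : γ x ∈ e.target := by
        rw [← h3 x ⟨hx.1, le_rfl⟩]; exact e.map_source hxe
      have h4 : γ ⁻¹' e.target ∈ 𝓝 x := 
        hγ.continuous.continuousAt (e.open_target.mem_nhds hγx)
      obtain ⟨ε, hε, hball⟩ := Metric.mem_nhds_iff.1 h4
      filter_upwards [Ioo_mem_nhdsGT (show x < x + ε by linarith)] with t ht
      have htar : ∀ s ∈ Icc x t, γ s ∈ e.target := by
        intro s hs
        apply hball
        rw [Metric.mem_ball, Real.dist_eq, abs_of_nonneg (by linarith [hs.1])]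
        linarith [hs.2, ht.2]
      have hG : ContinuousOn (fun s => e.symm (γ s)) (Icc x t) :=
        e.continuousOn_symm.comp hγ.continuous.continuousOn htar
      have hGx : e.symm (γ x) = Γ x := by
        rw [← h3 x ⟨hx.1, le_rfl⟩]; exact e.left_inv hxe
      refine ⟨fun s => if s ≤ x then Γ s else e.symm (γ s), ?_, ?_, ?_⟩
      · have : Icc 0 t = Icc 0 x ∪ Icc x t := (Icc_union_Icc_eq_Icc hx.1 ht.1.le).symm
        rw [this]
        refine ContinuousOn.union_of_isClosed ?_ ?_ isClosed_Icc isClosed_Icc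
        · exact h1.congr fun s hs => if_pos hs.2
        · refine hG.congr fun s hs => ?_
          rcases hs.1.eq_or_lt with h | h
          · subst h; simp [hGx]
          · simp [not_le.2 h]
      · simp [hx.1, h2]
      · intro s hs
        by_cases hsx : s ≤ x
        · simp [hsx, h3 s ⟨hs.1, hsx⟩]
        · simp only [hsx, if_false]
          exact e.right_inv (htar s ⟨(not_le.1 hsx).le, hs.2⟩)
    · apply isClosed_of_closure_subset
      intro x hx
      have hxI : x ∈ Icc (0:ℝ) 1 := by
        have := closure_mono inter_subset_right hx
        rwa [isClosed_Icc.closure_eq] at this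
      refine ⟨?_, hxI⟩
      have hlt : ∀ s < x, s ∈ S := by
        intro s hs
        obtain ⟨t, ht, ht2⟩ := mem_closure_iff.1 hx (Ioi s) isOpen_Ioi hs
        exact hdown s t (le_of_lt ht) ht2.1
      rcases hxI.1.eq_or_lt with hx0 | hx0
      · rw [← hx0]; exact hS0
      have : Nonempty V := ⟨xbar⟩
      choose! Γ h1 h2 h3 using hlt
      have heq : ∀ t < x, EqOn (fun s => Γ s s) (Γ t) (Icc 0 t) := by
        intro t ht s hs
        have hsx : s < x := hs.2.trans_lt ht
        refine (T2Space.isSeparatedMap p).eqOn_of_comp_eqOn hh.isLocallyInjective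
          (isPreconnected_Icc (a := (0:ℝ)) (b := s)) (h1 s hsx)
          ((h1 t ht).mono (Icc_subset_Icc_right hs.2)) ?_ (a := 0) ⟨le_rfl, hs.1⟩ ?_ ⟨hs.1, le_rfl⟩
        · intro u hu
          simp [h3 s hsx u hu, h3 t ht u ⟨hu.1, hu.2.trans hs.2⟩]
        · rw [h2 s hsx, h2 t ht]
      set F : ℝ → V := fun s => Γ s s with hF
      have hFc : ∀ t < x, ContinuousOn F (Icc 0 t) := fun t ht => (h1 t ht).congr (heq t ht)
      have hFp : ∀ s ∈ Ico 0 x, p (F s) = γ s := fun s hs => h3 s hs.2 s ⟨hs.1, le_rfl⟩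
      have hF0 : F 0 = xbar := h2 0 hx0
      have hFd : ∀ a b, 0 ≤ a → a ≤ b → b < x → dist (F a) (F b) ≤ L * (b - a) := by
        intro a b ha hab hb
        exact aux_lift_dist hp hγ hab ((hFc b hb).mono (Icc_subset_Icc_left ha))
          fun s hs => hFp s ⟨ha.trans hs.1, hs.2.trans_lt hb⟩
      have hFL : LipschitzOnWith L F (Ico 0 x) := by
        apply LipschitzOnWith.of_dist_le_mul
        intro a ha b hb
        rcases le_total a b with h | h
        · rw [dist_comm a b, Real.dist_eq, abs_of_nonneg (by linarith)]
          exact hFd a b ha.1 h hb.2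
        · rw [dist_comm (F a), Real.dist_eq, abs_of_nonneg (by linarith)]
          exact hFd b a hb.1 h ha.2
      have hne : (𝓝[Ico 0 x] x).NeBot := by
        rw [nhdsWithin_Ico_eq_nhdsLT hx0]; infer_instance
      have hcau : Cauchy (map F (𝓝[Ico 0 x] x)) := by
        refine Cauchy.map_of_le (cauchy_nhds.mono nhdsWithin_le_nhds) hFL.uniformContinuousOn ?_
        exact inf_le_right
      obtain ⟨v, -, hv⟩ := hcomplete L hL _ hcau (by
        rw [le_principal_iff, mem_map]
        filter_upwards [self_mem_nhdsWithin] with s hs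
        rw [mem_preimage, Metric.mem_closedBall, dist_comm, ← hF0]
        have := hFd 0 s le_rfl hs.1 hs.2
        have hL0 := L.2
        have : s ≤ 1 := hs.2.le.trans hxI.2
        have : (L:ℝ) * (s - 0) ≤ L * 1 := mul_le_mul_of_nonneg_left (by linarith) hL0
        linarith)
      refine ⟨Function.update F x v, ?_, ?_, ?_⟩
      · rw [continuousOn_update_iff, Icc_sdiff_right]
        exact ⟨hFL.continuousOn, fun _ => hv⟩
      · rw [Function.update_of_ne hx0.ne, hF0]
      · intro s hs
        rcases hs.2.eq_or_lt with h | h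
        · subst h
          rw [Function.update_self]
          have t1 : Tendsto (fun u => p (F u)) (𝓝[Ico 0 s] s) (𝓝 (p v)) :=
            (hh.continuous.tendsto v).comp hv
          have t2 : Tendsto γ (𝓝[Ico 0 s] s) (𝓝 (γ s)) :=
            (hγ.continuous.tendsto s).mono_left nhdsWithin_le_nhds
          refine tendsto_nhds_unique (t1.congr' ?_) t2
          filter_upwards [self_mem_nhdsWithin] with u hu using hFp u hu
        · rw [Function.update_of_ne h.ne]
          exact hFp s ⟨hs.1, h⟩
  exact hmain ⟨zero_le_one, le_rfl⟩

lemma aux_convex (k : ℕ) : Convex ℝ (stdSimplexE k) := by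
  intro x hx y hy a b ha hb hab
  refine ⟨fun i => ?_, ?_⟩
  · have := mul_nonneg ha (hx.1 i)
    have := mul_nonneg hb (hy.1 i)
    simp; linarith
  · simp [Finset.sum_add_distrib, ← Finset.mul_sum, hx.2, hy.2, hab]

lemma aux_diam (k : ℕ) {x y : EuclideanSpace ℝ (Fin (k+1))} (hx : x ∈ stdSimplexE k)
    (hy : y ∈ stdSimplexE k) : dist x y ≤ Real.sqrt 2 := by
  rw [EuclideanSpace.dist_eq]
  apply Real.sqrt_le_sqrt
  have h1 : ∀ z ∈ stdSimplexE k, ∀ i, z i ≤ 1 := by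
    intro z hz i
    rw [← hz.2]
    exact Finset.single_le_sum (fun j _ => hz.1 j) (Finset.mem_univ i)
  calc ∑ i, dist (x i) (y i) ^ 2 ≤ ∑ i, (x i + y i) := by
        apply Finset.sum_le_sum
        intro i _
        rw [Real.dist_eq, sq_abs]
        nlinarith [hx.1 i, hy.1 i, h1 x hx i, h1 y hy i, mul_nonneg (hx.1 i) (hy.1 i)]
    _ = 2 := by rw [Finset.sum_add_distrib, hx.2, hy.2]; norm_num

/-- The segment from `a` to `b` in the simplex. -/
noncomputable def auxSeg {k : ℕ} (a b : stdSimplexE k) (t : unitInterval) : stdSimplexE k :=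
  ⟨AffineMap.lineMap (a : EuclideanSpace ℝ (Fin (k+1))) (b : EuclideanSpace ℝ (Fin (k+1))) (t : ℝ),
    (aux_convex k).lineMap_mem a.2 b.2 t.2⟩

lemma auxSeg_zero {k : ℕ} (a b : stdSimplexE k) : auxSeg a b 0 = a := by
  apply Subtype.ext; simp [auxSeg]

lemma auxSeg_one {k : ℕ} (a b : stdSimplexE k) : auxSeg a b 1 = b := by
  apply Subtype.ext; simp [auxSeg]

lemma auxSeg_self {k : ℕ} (a : stdSimplexE k) (t : unitInterval) : auxSeg a a t = a := by
  apply Subtype.ext; simp [auxSeg]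

lemma auxSeg_dist {k : ℕ} (a b : stdSimplexE k) (s t : unitInterval) :
    dist (auxSeg a b s) (auxSeg a b t) = dist s t * dist a b := by
  rw [Subtype.dist_eq]
  simp only [auxSeg, dist_lineMap_lineMap]
  rfl

lemma auxSeg_cont {k : ℕ} (a : stdSimplexE k) :
    Continuous (fun q : unitInterval × stdSimplexE k => auxSeg a q.2 q.1) := by
  apply Continuous.subtype_mk
  simp only [AffineMap.lineMap_apply_module]
  fun_prop

lemma aux_w {k : ℕ} (a b : stdSimplexE k) : ∃ w : ℝ → stdSimplexE k, Continuous w ∧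
    (∀ x t, x ≤ t → dist (w x) (w t) ≤ dist a b * (t - x)) ∧ w 0 = a ∧ w 1 = b := by
  refine ⟨fun t => auxSeg a b (Set.projIcc 0 1 zero_le_one t), ?_, ?_, ?_, ?_⟩
  · have h1 : Continuous (fun t : unitInterval => auxSeg a b t) :=
      (auxSeg_cont a).comp (g := fun q : unitInterval × stdSimplexE k => auxSeg a q.2 q.1)
        (f := fun t => (t, b)) (by fun_prop)
    have h2 : Continuous (Set.projIcc (0:ℝ) 1 zero_le_one) := continuous_projIcc
    exact h1.comp h2
  · intro x t hxt
    have h3 := (LipschitzWith.projIcc (zero_le_one (α := ℝ))).dist_le_mul x t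
    rw [NNReal.coe_one, one_mul, dist_comm x t, Real.dist_eq t x,
      abs_of_nonneg (by linarith)] at h3
    rw [auxSeg_dist, mul_comm]
    exact mul_le_mul_of_nonneg_left h3 dist_nonneg
  · simp only [Set.projIcc_left]; exact auxSeg_zero a b
  · simp only [Set.projIcc_right]; exact auxSeg_one a b

open Set Filter Topology in
lemma aux_lip {k : ℕ} {A B : Type*} [MetricSpace A] [MetricSpace B] {f : stdSimplexE k → A}
    {g : stdSimplexE k → B} (hg : Continuous g)
    (hfg : ∀ x, ∃ u ∈ 𝓝 x, ∀ a ∈ u, ∀ b ∈ u, dist (f a) (f b) = dist (g a) (g b))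
    {K : ℝ≥0} (hf : LipschitzWith K f) : LipschitzWith K g := by
  apply LipschitzWith.of_dist_le_mul
  intro a b
  obtain ⟨w, hw, hwd, e0, e1⟩ := aux_w a b
  have := aux_dist_le (h := g ∘ w) (a := 0) (b := 1) (c := K * dist a b) zero_le_one
    (hg.comp hw).continuousOn (by
      intro x hx
      obtain ⟨u, hu, hd⟩ := hfg (w x)
      have h1 : ∀ᶠ t in 𝓝[>] x, w t ∈ u := (hw.tendsto x).mono_left nhdsWithin_le_nhds hu
      filter_upwards [h1, self_mem_nhdsWithin] with t ht htx
      have htx : x < t := htx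
      simp only [Function.comp]
      rw [← hd _ (mem_of_mem_nhds hu) _ ht]
      refine (hf.dist_le_mul _ _).trans ?_
      rw [mul_assoc]
      exact mul_le_mul_of_nonneg_left (hwd x t htx.le) K.2)
  simp only [Function.comp, e0, e1, sub_zero, mul_one] at this
  exact this

/-- Lifting Lipschitz singular simplices along a local isometry `p : V → M`:
if all closed balls of radius `r < C` around `xbar` are complete and `σ : Δ^k → M` is
Lipschitz with `Lip(σ) < C/√2` and `σ y = p xbar`, then there is a unique continuous lift
`σ'` of `σ` with `σ' y = xbar`; moreover `σ'` has image in `B(xbar, C)` and the same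
Lipschitz constant as `σ` (the same constants `K` work for `σ'` as for `σ`). -/
theorem localIsometry_simplex_lifting
    {V M : Type*} [MetricSpace V] [MetricSpace M] (k : ℕ)
    (p : V → M) (hp : IsLocalIsometry p) (xbar : V) (C : ℝ) (hC : 0 < C)
    (hcomplete : ∀ r : ℝ, r < C → IsComplete (Metric.closedBall xbar r))
    (σ : stdSimplexE k → M)
    (hσ : ∃ K : ℝ≥0, LipschitzWith K σ ∧ (K : ℝ) < C / Real.sqrt 2)
    (y : stdSimplexE k) (hy : σ y = p xbar) :
    ∃ σ' : stdSimplexE k → V,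
      (Continuous σ' ∧ (∀ z, p (σ' z) = σ z) ∧ σ' y = xbar) ∧
      (∀ τ : stdSimplexE k → V,
        (Continuous τ ∧ (∀ z, p (τ z) = σ z) ∧ τ y = xbar) → τ = σ') ∧
      (∀ z, σ' z ∈ Metric.ball xbar C) ∧
      ∀ K : ℝ≥0, LipschitzWith K σ' ↔ LipschitzWith K σ := by
  classical
  obtain ⟨K, hK, hKC⟩ := hσ
  have h2 : 0 < Real.sqrt 2 := by positivity
  rw [lt_div_iff₀ h2] at hKC
  have hh := aux_homeo hp
  have hsep := T2Space.isSeparatedMap p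
  have hpath : ∀ z : stdSimplexE k, ∃ Γ : unitInterval → V, Continuous Γ ∧ Γ 0 = xbar ∧
      ∀ t, p (Γ t) = σ (auxSeg y z t) := by
    intro z
    have hlip : LipschitzWith (K * Real.toNNReal (Real.sqrt 2))
        (fun t : ℝ => σ (auxSeg y z (Set.projIcc 0 1 zero_le_one t))) := by
      apply LipschitzWith.of_dist_le_mul
      intro s t
      refine (hK.dist_le_mul _ _).trans ?_
      rw [auxSeg_dist, NNReal.coe_mul, Real.coe_toNNReal _ h2.le, mul_assoc]
      have h3 := (LipschitzWith.projIcc (zero_le_one (α := ℝ))).dist_le_mul s t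
      rw [NNReal.coe_one, one_mul] at h3
      have h4 : dist y z ≤ Real.sqrt 2 := aux_diam k y.2 z.2
      rw [mul_comm (Real.sqrt 2)]
      gcongr
    obtain ⟨Γ, g1, g2, g3⟩ := aux_path hp hcomplete hlip
      (by rw [NNReal.coe_mul, Real.coe_toNNReal _ h2.le]; exact hKC)
      (by simp [auxSeg_zero, hy])
    refine ⟨fun t => Γ t, continuousOn_iff_continuous_domRestrict.1 g1, by simpa using g2, ?_⟩
    intro t
    rw [g3 t t.2]
    simp
  choose Γ g1 g2 g3 using hpath
  have hG : Continuous (fun q : unitInterval × stdSimplexE k => Γ q.2 q.1) := by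
    refine hh.continuous_lift hsep ⟨fun q => σ (auxSeg y q.2 q.1),
      hK.continuous.comp (auxSeg_cont y)⟩ ?_ ?_ ?_
    · ext q; exact g3 _ _
    · simp only [g2]; exact continuous_const
    · exact fun a => g1 a
  have hc : Continuous (fun z => Γ z 1) :=
    hG.comp (Continuous.prodMk continuous_const continuous_id)
  have hl : ∀ z, p (Γ z 1) = σ z := fun z => by rw [g3, auxSeg_one]
  have hyx : Γ y 1 = xbar := by
    have := hsep.const_of_comp hh.isLocallyInjective (g1 y)
      (fun a b => by rw [g3, g3, auxSeg_self, auxSeg_self]) 1 0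
    rw [this, g2]
  have hloc : ∀ x, ∃ u ∈ nhds x, ∀ a ∈ u, ∀ b ∈ u,
      dist (σ a) (σ b) = dist (Γ a 1) (Γ b 1) := by
    intro x
    obtain ⟨U, hU, hxU, -, -, hd⟩ := hp (Γ x 1)
    refine ⟨(fun z => Γ z 1) ⁻¹' U, hc.continuousAt (hU.mem_nhds hxU), fun a ha b hb => ?_⟩
    rw [← hl a, ← hl b]
    exact hd _ ha _ hb
  have hLip : ∀ K : ℝ≥0, LipschitzWith K (fun z => Γ z 1) ↔ LipschitzWith K σ := by
    intro K'
    refine ⟨fun h => aux_lip hK.continuous ?_ h, fun h => aux_lip hc hloc h⟩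
    intro x
    obtain ⟨u, hu, hd⟩ := hloc x
    exact ⟨u, hu, fun a ha b hb => (hd a ha b hb).symm⟩
  refine ⟨fun z => Γ z 1, ⟨hc, hl, hyx⟩, ?_, ?_, hLip⟩
  · rintro τ ⟨t1, t2, t3⟩
    have : PreconnectedSpace (stdSimplexE k) :=
      isPreconnected_iff_preconnectedSpace.1 (aux_convex k).isPreconnected
    refine hsep.eq_of_comp_eq hh.isLocallyInjective t1 hc ?_ y (t3.trans hyx.symm)
    ext z
    exact (t2 z).trans (hl z).symm
  · intro z
    have h3 := ((hLip K).2 hK).dist_le_mul z y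
    simp only [hyx] at h3
    rw [Metric.mem_ball]
    have h4 : dist z y ≤ Real.sqrt 2 := aux_diam k z.2 y.2
    have h5 := mul_le_mul_of_nonneg_left h4 K.2
    exact (h3.trans h5).trans_lt hKC
end
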